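/- Let χ = (P,Q,R) be a Kolmogorov vector field on 𝕋² with deg P, deg Q, deg R ≤ 3 (i.e., a cubic Kolmogorov vector field on 𝕋²). Then the polynomial identity (x²+y²)·χ(F) = 2F·χ(x²+y²) holds in ℝ[x,y,z]; consequently the rational function H(x,y,z) = ((x²+y²−a²)²+z²−1)·(x²+y²)^{−2} satisfies P·∂H/∂x + Q·∂H/∂y + R·∂H/∂z = 0 at every point of ℝ³ with x²+y² ≠ 0, i.e., H is a rational first integral of χ. -/

import Mathlib

open MvPolynomial

/-- Derivative of `g` along the polynomial vector field `(P, Q, R)` in `ℝ[x,y,z]`. -/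
noncomputable def vf (P Q R g : MvPolynomial (Fin 3) ℝ) : MvPolynomial (Fin 3) ℝ :=
  P * pderiv 0 g + Q * pderiv 1 g + R * pderiv 2 g

/-- The defining polynomial `F = (x²+y²-a²)² + z² - 1` of the torus `𝕋²`. -/
noncomputable def torusF (a : ℝ) : MvPolynomial (Fin 3) ℝ :=
  (X 0 ^ 2 + X 1 ^ 2 - C (a ^ 2)) ^ 2 + X 2 ^ 2 - 1

/-- `(P, Q, R)` is a polynomial vector field on the torus `𝕋²`. -/
def IsVFOnTorus (a : ℝ) (P Q R : MvPolynomial (Fin 3) ℝ) : Prop :=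
  ∃ K : MvPolynomial (Fin 3) ℝ, vf P Q R (torusF a) = K * torusF a


/-- The rational function `H = ((x²+y²-a²)² + z² - 1) / (x²+y²)²` on `ℝ³`. -/
noncomputable def Hfun (a : ℝ) : (Fin 3 → ℝ) → ℝ := fun v =>
  ((v 0 ^ 2 + v 1 ^ 2 - a ^ 2) ^ 2 + v 2 ^ 2 - 1) / (v 0 ^ 2 + v 1 ^ 2) ^ 2

/-!
Write `ρ = x² + y²`, `F = (ρ - a²)² + z² - 1` and `χ(F) = K F`, so that `deg K ≤ 2`. The point is
that `D = 2 χ(ρ) - K ρ` vanishes: then `ρ²` has the same cofactor `K` as `F`, and the quotient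
`F / ρ²` is a first integral by Darboux's method.

Substituting `χ(F) = 2 (ρ - a²) χ(ρ) + 2 z R` gives
`(ρ - a²) (D + a² K) = z (z K - 2 R) - K`, whence `deg D ≤ 2`. On the `x`-axis this reads
`(x² - a²) (D + a² K) = -K`; as `deg K ≤ 2`, the factor `D + a² K` is a constant `m` there, and
`D(0) = 0` yields `m = a⁴ m`. Hence `m = 0`, and `K` and `D` vanish on the `x`-axis, likewise on the
`y`-axis. Since `D` lies in the ideal `(x², y²)` and has degree at most `2`, it is zero.
-/

section Degree

variable {σ R : Type*} [CommSemiring R]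

lemma totalDegree_pderiv_le (i : σ) (f : MvPolynomial σ R) :
    (pderiv i f).totalDegree ≤ f.totalDegree - 1 := by
  classical
  refine Finset.sup_le fun m hm => Nat.le_sub_one_of_lt ?_
  have hcoeff : coeff (m + Finsupp.single i 1) f ≠ 0 := fun h => by
    simp [coeff_pderiv, h] at hm
  have hle := le_totalDegree (mem_support_iff.mpr hcoeff)
  rw [Finsupp.sum_add_index' (fun _ => rfl) (fun _ _ _ => rfl),
    Finsupp.sum_single_index rfl] at hle
  exact hle

lemma totalDegree_le_of_totalDegree_mul_le [NoZeroDivisors R] {f g : MvPolynomial σ R} {n : ℕ}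
    (hf : f ≠ 0) (h : (f * g).totalDegree ≤ f.totalDegree + n) : g.totalDegree ≤ n := by
  rcases eq_or_ne g 0 with rfl | hg
  · simp
  · rw [totalDegree_mul_of_isDomain hf hg] at h
    exact Nat.le_of_add_le_add_left h

lemma mem_span_X_pow_image_iff {f : MvPolynomial σ R} {s : Set σ} {n : ℕ} :
    f ∈ Ideal.span ((fun i => (X i ^ n : MvPolynomial σ R)) '' s) ↔
      ∀ m ∈ f.support, ∃ i ∈ s, n ≤ m i := by
  have h := mem_ideal_span_monomial_image (x := f) (s := (fun i => Finsupp.single i n) '' s)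
  simpa [Set.image_image, ← X_pow_eq_monomial, Finsupp.single_le_iff] using h

end Degree

section AxisRestrict

variable {σ R : Type*} [DecidableEq σ]

/-- The restriction of a polynomial to the `i`-th coordinate axis, as a univariate polynomial in
the `i`-th coordinate: the other variables are set to zero. -/
noncomputable def axisRestrict [CommSemiring R] (i : σ) :
    MvPolynomial σ R →ₐ[R] Polynomial R :=
  aeval (Pi.single i Polynomial.X)

@[simp]
lemma axisRestrict_X_self [CommSemiring R] (i : σ) :
    axisRestrict i (X i : MvPolynomial σ R) = Polynomial.X := by
  simp [axisRestrict]

lemma axisRestrict_X_of_ne [CommSemiring R] {i j : σ} (h : j ≠ i) :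
    axisRestrict i (X j : MvPolynomial σ R) = 0 := by
  simp [axisRestrict, h]

@[simp]
lemma axisRestrict_C [CommSemiring R] (i : σ) (c : R) :
    axisRestrict i (C c : MvPolynomial σ R) = Polynomial.C c := by
  simp [axisRestrict]

lemma coeff_axisRestrict [CommSemiring R] (i : σ) (f : MvPolynomial σ R) (n : ℕ) :
    (axisRestrict i f).coeff n = coeff (Finsupp.single i n) f := by
  induction f using MvPolynomial.induction_on' with
  | add f g hf hg => simp [hf, hg]
  | monomial m c =>
    by_cases hm : ∃ j, j ≠ i ∧ m j ≠ 0
    · obtain ⟨j, hji, hj⟩ := hm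
      have hne : m ≠ Finsupp.single i n := fun h => hj (by simp [h, hji])
      have hprod : (m.prod fun k e => (Pi.single i Polynomial.X : σ → Polynomial R) k ^ e) = 0 :=
        Finset.prod_eq_zero (Finsupp.mem_support_iff.mpr hj) (by simp [hji, hj])
      simp [axisRestrict, aeval_monomial, hprod, coeff_monomial, hne]
    · push Not at hm
      obtain ⟨k, rfl⟩ : ∃ k, m = Finsupp.single i k := by
        refine ⟨m i, Finsupp.ext fun j => ?_⟩
        rcases eq_or_ne j i with rfl | hji
        · simp
        · simp [hm j hji, hji]
      simp [axisRestrict, aeval_monomial, coeff_monomial, Polynomial.coeff_X_pow,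
        (Finsupp.single_injective i).eq_iff, eq_comm]

lemma natDegree_axisRestrict_le [CommSemiring R] (i : σ) (f : MvPolynomial σ R) :
    (axisRestrict i f).natDegree ≤ f.totalDegree := by
  refine (aeval_natDegree_le f le_rfl _ fun j => ?_).trans (mul_one _).le
  rcases eq_or_ne j i with rfl | hji
  · simpa using Polynomial.natDegree_X_le
  · simp [hji]

-- By degree, `f` is a linear combination of the `X i ^ n`, and restricting reads off coefficients.
lemma eq_zero_of_axisRestrict_eq_zero [CommSemiring R] {s : Set σ} {n : ℕ}
    {f : MvPolynomial σ R} (hdeg : f.totalDegree ≤ n)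
    (hspan : f ∈ Ideal.span ((fun i => (X i ^ n : MvPolynomial σ R)) '' s))
    (haxis : ∀ i ∈ s, axisRestrict i f = 0) : f = 0 := by
  by_contra hf
  obtain ⟨m, hm⟩ := support_nonempty.mpr hf
  obtain ⟨i, his, hi⟩ := mem_span_X_pow_image_iff.mp hspan m hm
  have hle : Finsupp.single i n ≤ m := Finsupp.single_le_iff.mpr hi
  have hmdeg : m.degree ≤ n := (le_totalDegree hm).trans hdeg
  have hm_eq : m = Finsupp.single i n := by
    obtain ⟨k, rfl⟩ := exists_add_of_le hle
    have hk : k.degree = 0 := by simpa using hmdeg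
    simp [(Finsupp.degree_eq_zero_iff k).mp hk]
  rw [mem_support_iff, hm_eq, ← coeff_axisRestrict, haxis i his] at hm
  simp at hm

lemma eq_zero_of_X_pow_sub_C_mul_eq_neg [CommRing R] [IsDomain R] {c : R} (hc : c ^ 2 ≠ 1)
    {n : ℕ} (hn : n ≠ 0) {f g : Polynomial R} (hg : g.natDegree ≤ n)
    (h : (Polynomial.X ^ n - Polynomial.C c) * f = -g)
    (h_coeff : f.coeff 0 = c * g.coeff 0) : f = 0 := by
  by_contra hf
  have hf_deg : f.natDegree = 0 := by
    have hdeg := congrArg Polynomial.natDegree h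
    rw [Polynomial.natDegree_mul (Polynomial.X_pow_sub_C_ne_zero hn.bot_lt c) hf,
      Polynomial.natDegree_X_pow_sub_C, Polynomial.natDegree_neg] at hdeg
    omega
  have hg0 : g.coeff 0 = c * f.coeff 0 := by
    simpa [Polynomial.mul_coeff_zero, hn.symm] using (congrArg (Polynomial.coeff · 0) h).symm
  have hf0 : (c ^ 2 - 1) * f.coeff 0 = 0 := by linear_combination -h_coeff - c * hg0
  apply hf
  rw [Polynomial.eq_C_of_natDegree_eq_zero hf_deg,
    (mul_eq_zero.mp hf0).resolve_left (sub_ne_zero.mpr hc), Polynomial.C_0]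

lemma eq_zero_of_mul_add_C_mul_eq_sub [CommRing R] [IsDomain R] {s : Set σ} {c : R} (hc : c ^ 2 ≠ 1)
    {n : ℕ} (hn : n ≠ 0) {q D K N : MvPolynomial σ R}
    (hq : ∀ i ∈ s, axisRestrict i q = Polynomial.X ^ n - Polynomial.C c)
    (hN : ∀ i ∈ s, axisRestrict i N = 0)
    (hK : K.totalDegree ≤ n) (hD : D.totalDegree ≤ n)
    (hspan : D ∈ Ideal.span ((fun i => (X i ^ n : MvPolynomial σ R)) '' s))
    (h : q * (D + C c * K) = N - K) : D = 0 := by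
  refine eq_zero_of_axisRestrict_eq_zero hD hspan fun i hi => ?_
  have hD0 : (axisRestrict i D).coeff 0 = 0 := by
    rw [coeff_axisRestrict, Finsupp.single_zero, ← notMem_support_iff]
    intro h0
    obtain ⟨j, -, hj⟩ := mem_span_X_pow_image_iff.mp hspan 0 h0
    exact hn (Nat.le_zero.mp hj)
  have hmul : (Polynomial.X ^ n - Polynomial.C c) *
      (axisRestrict i D + Polynomial.C c * axisRestrict i K) = -axisRestrict i K := by
    simpa [hq i hi, hN i hi] using congrArg (axisRestrict i) h
  have hsum := eq_zero_of_X_pow_sub_C_mul_eq_neg hc hn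
    ((natDegree_axisRestrict_le i K).trans hK) hmul (by simp [hD0])
  have hK0 : axisRestrict i K = 0 := by simpa [hsum] using hmul
  simpa [hK0] using hsum

end AxisRestrict

section Differential

variable {σ 𝕜 : Type*} [NontriviallyNormedField 𝕜]

lemma hasFDerivAt_eval [Fintype σ] (p : MvPolynomial σ 𝕜) (v : σ → 𝕜) :
    HasFDerivAt (fun u => eval u p)
      (∑ i, eval v (pderiv i p) • ContinuousLinearMap.proj (R := 𝕜) (φ := fun _ : σ => 𝕜) i) v := by
  classical
  induction p using MvPolynomial.induction_on with
  | C c =>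
    simp only [eval_C]
    exact (hasFDerivAt_const c v).congr_fderiv (by ext w; simp)
  | add p q hp hq =>
    simp only [map_add]
    exact (hp.fun_add hq).congr_fderiv (by
      ext w
      simp [add_mul, Finset.sum_add_distrib])
  | mul_X p j hp =>
    have hX : HasFDerivAt (fun u : σ → 𝕜 => u j)
      (ContinuousLinearMap.proj (R := 𝕜) (φ := fun _ : σ => 𝕜) j) v := hasFDerivAt_apply j v
    simp only [map_mul, eval_X]
    refine (hp.fun_mul hX).congr_fderiv ?_
    ext w
    simp [pderiv_X, Pi.single_apply, apply_ite (eval v), add_mul, Finset.sum_add_distrib,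
      Finset.mul_sum, mul_assoc]

lemma fderiv_eval_div_single [Finite σ] [DecidableEq σ] (f g : MvPolynomial σ 𝕜) {v : σ → 𝕜}
    (hg : eval v g ≠ 0) (i : σ) :
    fderiv 𝕜 (fun u => eval u f / eval u g) v (Pi.single i 1) =
      (eval v g * eval v (pderiv i f) - eval v f * eval v (pderiv i g)) / eval v g ^ 2 := by
  have := Fintype.ofFinite σ
  have hinv : HasFDerivAt (fun u => (eval u g)⁻¹) _ v :=
    (hasDerivAt_inv hg).comp_hasFDerivAt v (hasFDerivAt_eval g v)
  simp only [div_eq_mul_inv]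
  rw [((hasFDerivAt_eval f v).fun_mul hinv).fderiv]
  simp only [add_apply, smul_apply, sum_apply, ContinuousLinearMap.proj_apply, Pi.single_apply,
    smul_eq_mul, mul_ite, mul_one, mul_zero, Finset.sum_ite_eq', Finset.mem_univ, ↓reduceIte]
  field_simp
  ring

end Differential

section VectorField

variable {P Q R : MvPolynomial (Fin 3) ℝ}

lemma vf_sq (g : MvPolynomial (Fin 3) ℝ) : vf P Q R (g ^ 2) = 2 * g * vf P Q R g := by
  simp only [vf, pderiv_pow]
  push_cast
  ring

lemma totalDegree_vf_le {n : ℕ} (hP : P.totalDegree ≤ n) (hQ : Q.totalDegree ≤ n)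
    (hR : R.totalDegree ≤ n) (g : MvPolynomial (Fin 3) ℝ) :
    (vf P Q R g).totalDegree ≤ n + (g.totalDegree - 1) := by
  have hmul {A : MvPolynomial (Fin 3) ℝ} (hA : A.totalDegree ≤ n) (i : Fin 3) :
      (A * pderiv i g).totalDegree ≤ n + (g.totalDegree - 1) :=
    (totalDegree_mul _ _).trans (add_le_add hA (totalDegree_pderiv_le i g))
  exact (totalDegree_add _ _).trans (max_le
    ((totalDegree_add _ _).trans (max_le (hmul hP 0) (hmul hQ 1))) (hmul hR 2))

lemma totalDegree_cofactor_le {n : ℕ} (hP : P.totalDegree ≤ n) (hQ : Q.totalDegree ≤ n)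
    (hR : R.totalDegree ≤ n) {g K : MvPolynomial (Fin 3) ℝ} (hg : g ≠ 0)
    (h : vf P Q R g = K * g) : K.totalDegree ≤ n - 1 := by
  rcases Nat.eq_zero_or_pos g.totalDegree with hg_deg | hg_deg
  · have hvf : vf P Q R g = 0 := by
      rw [totalDegree_eq_zero_iff_eq_C.mp hg_deg]
      simp [vf]
    have hK : K = 0 := (mul_eq_zero.mp (h.symm.trans hvf)).resolve_right hg
    simp [hK]
  · rcases eq_or_ne K 0 with rfl | hK
    · simp
    · have hle := totalDegree_vf_le hP hQ hR g
      rw [h, totalDegree_mul_of_isDomain hK hg] at hle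
      omega

-- Darboux: cofactors subtract in quotients, so `f / g` has cofactor `K - K`.
lemma vf_fderiv_div_eq_zero_of_cofactor {f g K : MvPolynomial (Fin 3) ℝ}
    (hf : vf P Q R f = K * f) (hg : vf P Q R g = K * g) {v : Fin 3 → ℝ} (hv : eval v g ≠ 0) :
    eval v P * fderiv ℝ (fun u => eval u f / eval u g) v (Pi.single 0 1) +
      eval v Q * fderiv ℝ (fun u => eval u f / eval u g) v (Pi.single 1 1) +
      eval v R * fderiv ℝ (fun u => eval u f / eval u g) v (Pi.single 2 1) = 0 := by
  have hf' := congrArg (eval v) hf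
  have hg' := congrArg (eval v) hg
  simp only [vf, map_add, map_mul] at hf' hg'
  simp only [fderiv_eval_div_single f g hv]
  field_simp
  linear_combination eval v g * hf' - eval v f * hg'

end VectorField

section Torus

variable {P Q R : MvPolynomial (Fin 3) ℝ}

lemma vf_X_sq_add_X_sq : vf P Q R (X 0 ^ 2 + X 1 ^ 2) = 2 * (X 0 * P + X 1 * Q) := by
  simp only [vf, map_add, pderiv_pow, pderiv_X, Pi.single_apply, Fin.reduceEq, ↓reduceIte]
  push_cast
  ring

lemma vf_torusF (a : ℝ) : vf P Q R (torusF a) =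
    2 * (X 0 ^ 2 + X 1 ^ 2 - C (a ^ 2)) * vf P Q R (X 0 ^ 2 + X 1 ^ 2) + 2 * X 2 * R := by
  rw [vf_X_sq_add_X_sq]
  simp only [vf, torusF, map_add, map_sub, pderiv_pow, pderiv_X, pderiv_C, pderiv_one,
    Pi.single_apply, Fin.reduceEq, ↓reduceIte]
  push_cast
  ring

lemma torusF_ne_zero (a : ℝ) : torusF a ≠ 0 := fun h => by
  have hval : eval ![0, 0, 2] (torusF a) = (a ^ 2) ^ 2 + 2 ^ 2 - 1 := by
    simp [torusF]
  have hpos : 0 < (a ^ 2) ^ 2 + 2 ^ 2 - 1 := by linarith [sq_nonneg (a ^ 2)]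
  rw [← hval, h, map_zero] at hpos
  exact hpos.false

lemma two_le_totalDegree_X_sq_add_X_sq_sub_C (c : ℝ) :
    2 ≤ (X 0 ^ 2 + X 1 ^ 2 - C c : MvPolynomial (Fin 3) ℝ).totalDegree := by
  have h := natDegree_axisRestrict_le 0 (X 0 ^ 2 + X 1 ^ 2 - C c : MvPolynomial (Fin 3) ℝ)
  simpa [axisRestrict_X_of_ne] using h

lemma torusF_cofactor_identity {a : ℝ} {K : MvPolynomial (Fin 3) ℝ}
    (hK : vf P Q R (torusF a) = K * torusF a) :
    (X 0 ^ 2 + X 1 ^ 2 - C (a ^ 2)) *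
        (2 * vf P Q R (X 0 ^ 2 + X 1 ^ 2) - K * (X 0 ^ 2 + X 1 ^ 2) + C (a ^ 2) * K) =
      X 2 * (X 2 * K - C 2 * R) - K := by
  rw [vf_torusF, torusF] at hK
  rw [show (C 2 : MvPolynomial (Fin 3) ℝ) = 2 from map_ofNat C 2]
  linear_combination hK

lemma totalDegree_two_mul_vf_sub_cofactor_mul_le {a : ℝ} {K : MvPolynomial (Fin 3) ℝ}
    (hR : R.totalDegree ≤ 3) (hK_deg : K.totalDegree ≤ 2)
    (hK : vf P Q R (torusF a) = K * torusF a) :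
    (2 * vf P Q R (X 0 ^ 2 + X 1 ^ 2) - K * (X 0 ^ 2 + X 1 ^ 2)).totalDegree ≤ 2 := by
  have hw := two_le_totalDegree_X_sq_add_X_sq_sub_C (a ^ 2)
  have hw0 : (X 0 ^ 2 + X 1 ^ 2 - C (a ^ 2) : MvPolynomial (Fin 3) ℝ) ≠ 0 := fun h => by
    rw [h, totalDegree_zero] at hw
    omega
  have hXK : (X 2 * K).totalDegree ≤ 3 :=
    (totalDegree_mul _ _).trans (by rw [totalDegree_X]; omega)
  have hCR : (C 2 * R).totalDegree ≤ 3 :=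
    (totalDegree_mul _ _).trans (by rw [totalDegree_C]; omega)
  have hrhs : (X 2 * (X 2 * K - C 2 * R) - K).totalDegree ≤ 4 := by
    have hsub := (totalDegree_sub (X 2 * K) (C 2 * R)).trans (max_le hXK hCR)
    refine (totalDegree_sub _ _).trans (max_le ((totalDegree_mul _ _).trans ?_) (by omega))
    rw [totalDegree_X]
    omega
  have hsum : (2 * vf P Q R (X 0 ^ 2 + X 1 ^ 2) - K * (X 0 ^ 2 + X 1 ^ 2) +
      C (a ^ 2) * K).totalDegree ≤ 2 :=
    totalDegree_le_of_totalDegree_mul_le hw0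
      (by rw [torusF_cofactor_identity hK]; exact hrhs.trans (by omega))
  have hCK : (C (a ^ 2) * K).totalDegree ≤ 2 :=
    (totalDegree_mul _ _).trans (by rw [totalDegree_C]; omega)
  simpa using (totalDegree_sub _ _).trans (max_le hsum hCK)

lemma two_mul_vf_sub_cofactor_mul_mem_span (hx : X 0 ∣ P) (hy : X 1 ∣ Q)
    (K : MvPolynomial (Fin 3) ℝ) :
    2 * vf P Q R (X 0 ^ 2 + X 1 ^ 2) - K * (X 0 ^ 2 + X 1 ^ 2) ∈
      Ideal.span ((fun i => (X i ^ 2 : MvPolynomial (Fin 3) ℝ)) '' {0, 1}) := by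
  obtain ⟨p, rfl⟩ := hx
  obtain ⟨q, rfl⟩ := hy
  rw [Set.image_pair, Ideal.mem_span_pair, vf_X_sq_add_X_sq]
  exact ⟨4 * p - K, 4 * q - K, by ring⟩

lemma two_mul_vf_X_sq_add_X_sq_eq_cofactor_mul {a : ℝ} (ha : a ^ 2 ≠ 1)
    (hP : P.totalDegree ≤ 3) (hQ : Q.totalDegree ≤ 3) (hR : R.totalDegree ≤ 3)
    (hx : X 0 ∣ P) (hy : X 1 ∣ Q) {K : MvPolynomial (Fin 3) ℝ}
    (hK : vf P Q R (torusF a) = K * torusF a) :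
    2 * vf P Q R (X 0 ^ 2 + X 1 ^ 2) = K * (X 0 ^ 2 + X 1 ^ 2) := by
  have hK_deg : K.totalDegree ≤ 2 := totalDegree_cofactor_le hP hQ hR (torusF_ne_zero a) hK
  have hc : (a ^ 2) ^ 2 ≠ 1 := fun h =>
    ha ((pow_eq_one_iff_of_nonneg (sq_nonneg a) two_ne_zero).mp h)
  refine sub_eq_zero.mp (eq_zero_of_mul_add_C_mul_eq_sub (s := {0, 1}) hc two_ne_zero ?_ ?_ hK_deg
    (totalDegree_two_mul_vf_sub_cofactor_mul_le hR hK_deg hK)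
    (two_mul_vf_sub_cofactor_mul_mem_span hx hy K) (torusF_cofactor_identity hK))
  · rintro i (rfl | rfl) <;> simp [axisRestrict_X_of_ne]
  · rintro i (rfl | rfl) <;> simp [axisRestrict_X_of_ne]

lemma Hfun_eq_eval_div_eval (a : ℝ) :
    Hfun a = fun v => eval v (torusF a) / eval v ((X 0 ^ 2 + X 1 ^ 2) ^ 2) := by
  ext v
  simp [Hfun, torusF]

end Torus

theorem stmt_12_general (a : ℝ) (ha : a ^ 2 ≠ 1) (P Q R : MvPolynomial (Fin 3) ℝ)
    (hP : P.totalDegree ≤ 3) (hQ : Q.totalDegree ≤ 3) (hR : R.totalDegree ≤ 3)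
    (hx : X 0 ∣ P) (hy : X 1 ∣ Q)
    (hvf : IsVFOnTorus a P Q R) :
    (X 0 ^ 2 + X 1 ^ 2) * vf P Q R (torusF a) =
        2 * torusF a * vf P Q R (X 0 ^ 2 + X 1 ^ 2) ∧
    ∀ v : Fin 3 → ℝ, (v 0) ^ 2 + (v 1) ^ 2 ≠ 0 →
      eval v P * fderiv ℝ (Hfun a) v (Pi.single 0 1) +
      eval v Q * fderiv ℝ (Hfun a) v (Pi.single 1 1) +
      eval v R * fderiv ℝ (Hfun a) v (Pi.single 2 1) = 0 := by
  obtain ⟨K, hK⟩ := hvf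
  have hρ := two_mul_vf_X_sq_add_X_sq_eq_cofactor_mul ha hP hQ hR hx hy hK
  refine ⟨by linear_combination (X 0 ^ 2 + X 1 ^ 2) * hK - torusF a * hρ, fun v hv => ?_⟩
  have hρ_sq : vf P Q R ((X 0 ^ 2 + X 1 ^ 2) ^ 2) = K * (X 0 ^ 2 + X 1 ^ 2) ^ 2 := by
    rw [vf_sq]
    linear_combination (X 0 ^ 2 + X 1 ^ 2) * hρ
  rw [Hfun_eq_eval_div_eval]
  exact vf_fderiv_div_eq_zero_of_cofactor hK hρ_sq (by simpa using hv)

theorem stmt_12 (a : ℝ) (ha : 1 < a) (P Q R : MvPolynomial (Fin 3) ℝ)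
    (hP : P.totalDegree ≤ 3) (hQ : Q.totalDegree ≤ 3) (hR : R.totalDegree ≤ 3)
    (hx : X 0 ∣ P) (hy : X 1 ∣ Q) (hz : X 2 ∣ R)
    (hvf : IsVFOnTorus a P Q R) :
    (X 0 ^ 2 + X 1 ^ 2) * vf P Q R (torusF a) =
        2 * torusF a * vf P Q R (X 0 ^ 2 + X 1 ^ 2) ∧
    ∀ v : Fin 3 → ℝ, (v 0) ^ 2 + (v 1) ^ 2 ≠ 0 →
      eval v P * fderiv ℝ (Hfun a) v (Pi.single 0 1) +
      eval v Q * fderiv ℝ (Hfun a) v (Pi.single 1 1) +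
      eval v R * fderiv ℝ (Hfun a) v (Pi.single 2 1) = 0 := by
  exact stmt_12_general a (one_lt_pow₀ ha two_ne_zero).ne' P Q R hP hQ hR hx hy hvf
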